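/- arXiv:1010.3305 — 3 statements merged into one kernel-verified Lean document; each statement's English description precedes it below -/
import Mathlib

section
/- Fix an integer k ≥ 2 and a real β with β ≥ √k. For each n ≥ 1, model the leaves of the depth-n rooted k-ary tree as functions from Fin n to Fin k with tree distance d(u,v) = 2(n − ℓ(u,v)), where ℓ(u,v) is the length of the longest common prefix, and let P(n) be the proportion of the total traffic that passes through the root, namely P(n) = ( Σ_{(u,v): d(u,v)=2n} β^{−d(u,v)} ) / ( Σ_{(u,v)} β^{−d(u,v)} ), both sums over ordered pairs of leaves. Then P(n) → 0 as n → ∞. -/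
/-!
Fix a leaf `u`, and let `T j` be its traffic to the leaves `v` whose geodesic from `u` turns around
at depth `j`, i.e. `ℓ(u,v) = j`. For `j < n` there are `(k - 1) k ^ (n - 1 - j)` of them, at
distance `2 (n - j)`, so `T j = (1 - 1/k) (k / β²) ^ (n - j)`. As `k ≤ β²`, none of the `n` levels
`j < n` carries less than the root level `j = 0`, whose share of the total is therefore at most
`1 / n`.
-/

open Filter

/-- The length of the longest common prefix of two leaves of the depth-`n`
rooted `k`-ary tree (leaves modeled as functions `Fin n → Fin k`):
the largest `j ≤ n` such that `u i = v i` for all `i < j`. -/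
def prefLen {n k : ℕ} (u v : Fin n → Fin k) : ℕ :=
  Nat.findGreatest (fun j => ∀ i : Fin n, (i : ℕ) < j → u i = v i) n

/-- The tree distance between two leaves of the depth-`n` rooted `k`-ary tree:
`d(u,v) = 2 (n - ℓ(u,v))`. -/
def treeDist {n k : ℕ} (u v : Fin n → Fin k) : ℕ :=
  2 * (n - prefLen u v)

section PrefixLength

variable {n k : ℕ}

theorem prefLen_le (u v : Fin n → Fin k) : prefLen u v ≤ n :=
  Nat.findGreatest_le n

theorem prefLen_eq_iff {u v : Fin n → Fin k} {j : Fin n} :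
    prefLen u v = j ↔ (∀ i < j, u i = v i) ∧ u j ≠ v j := by
  rw [prefLen, Nat.findGreatest_eq_iff]
  constructor
  · rintro ⟨-, h_agree, h_max⟩
    have h_lt : ∀ i < j, u i = v i := fun i hi ↦ h_agree (Nat.ne_zero_of_lt hi) i hi
    refine ⟨h_lt, fun h_eq ↦ h_max (Nat.lt_succ_self j) j.isLt fun i hi ↦ ?_⟩
    obtain hij | rfl := (show i ≤ j from Nat.lt_succ_iff.mp hi).lt_or_eq
    exacts [h_lt i hij, h_eq]
  · rintro ⟨h_lt, h_ne⟩
    exact ⟨j.isLt.le, fun _ i hi ↦ h_lt i hi, fun _ hjm _ h_agree ↦ h_ne (h_agree j hjm)⟩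

theorem treeDist_eq_two_mul_iff {u v : Fin n → Fin k} :
    treeDist u v = 2 * n ↔ prefLen u v = 0 := by
  have := prefLen_le u v
  unfold treeDist
  lia

theorem card_filter_prefLen_eq (u : Fin n → Fin k) (j : Fin n) :
    ({v | prefLen u v = j} : Finset (Fin n → Fin k)).card = (k - 1) * k ^ (n - 1 - j) := by
  have h_box : ({v | prefLen u v = j} : Finset (Fin n → Fin k)) =
      Fintype.piFinset fun i ↦ if i < j then {u i} else if i = j then {u i}ᶜ else .univ := by
    ext v
    simp only [Finset.mem_filter_univ, prefLen_eq_iff, Fintype.mem_piFinset]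
    refine ⟨fun ⟨h_lt, h_ne⟩ i ↦ ?_, fun h ↦ ⟨fun i hi ↦ ?_, ?_⟩⟩
    · split_ifs with hij h_eq
      · simp [h_lt i hij]
      · simpa [h_eq] using h_ne.symm
      · simp
    · simpa [hi, eq_comm] using h i
    · simpa [eq_comm] using h j
  have h_gt : ({i | j ≤ i} : Finset (Fin n)).filter (¬· = j) = Finset.Ioi j := by
    grind
  have h_eq : ({i | j ≤ i} : Finset (Fin n)).filter (· = j) = {j} := by
    grind
  rw [h_box, Fintype.card_piFinset]
  simp [apply_ite Finset.card, Finset.prod_ite, h_gt, h_eq, Finset.card_compl]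

end PrefixLength

section LevelTraffic

variable {K : Type*} [Field K] {n k : ℕ}

/-- The traffic between the leaf `u` and the leaves `v` for which the geodesic from `u` to `v` turns
around at depth `j`. The depth is a natural number rather than an element of `Fin n`, so that the
root level `j = 0` makes sense for every `n`; the level `j = n` consists of `u` alone. -/
def levelTraffic (β : K) (u : Fin n → Fin k) (j : ℕ) : K :=
  ∑ v with prefLen u v = j, β ^ (-(treeDist u v : ℤ))

theorem sum_ite_treeDist_eq_two_mul (β : K) (u : Fin n → Fin k) :
    ∑ v, (if treeDist u v = 2 * n then β ^ (-(treeDist u v : ℤ)) else 0) =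
      levelTraffic β u 0 := by
  simp only [levelTraffic, Finset.sum_filter, treeDist_eq_two_mul_iff]

theorem levelTraffic_eq [CharZero K] (β : K) (u : Fin n → Fin k) (j : Fin n) :
    levelTraffic β u j = (1 - (k : K)⁻¹) * (k / β ^ 2) ^ (n - j : ℕ) := by
  have hk : 0 < k := Fin.pos (u j)
  have hk' : (k : K) ≠ 0 := Nat.cast_ne_zero.mpr hk.ne'
  have h_exp : n - j = n - 1 - j + 1 := by lia
  calc levelTraffic β u j
      = ∑ v with prefLen u v = j, (β ^ (2 * (n - j : ℕ)))⁻¹ := by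
        refine Finset.sum_congr rfl fun v hv ↦ ?_
        rw [zpow_neg, zpow_natCast, treeDist, (Finset.mem_filter.mp hv).2]
    _ = (k - 1) * k ^ (n - 1 - j : ℕ) * (β ^ (2 * (n - j : ℕ)))⁻¹ := by
        rw [Finset.sum_const, card_filter_prefLen_eq, nsmul_eq_mul]
        push_cast [Nat.cast_pred hk]
        rfl
    _ = (1 - (k : K)⁻¹) * (k / β ^ 2) ^ (n - j : ℕ) := by
        rw [div_pow, ← pow_mul, div_eq_mul_inv, ← mul_assoc]
        congr 1
        rw [h_exp, pow_succ]
        field_simp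

variable [LinearOrder K] [IsStrictOrderedRing K] {β : K}

theorem zpow_neg_treeDist_nonneg (β : K) (u v : Fin n → Fin k) :
    0 ≤ β ^ (-(treeDist u v : ℤ)) := by
  rw [zpow_neg, zpow_natCast]
  exact inv_nonneg.mpr ((even_two_mul _).pow_nonneg β)

theorem levelTraffic_nonneg (β : K) (u : Fin n → Fin k) (j : ℕ) : 0 ≤ levelTraffic β u j :=
  Finset.sum_nonneg fun v _ ↦ zpow_neg_treeDist_nonneg β u v

theorem levelTraffic_mono (hβ : (k : K) ≤ β ^ 2) (u : Fin n → Fin k) {i j : Fin n} (hij : i ≤ j) :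
    levelTraffic β u i ≤ levelTraffic β u j := by
  rw [levelTraffic_eq, levelTraffic_eq]
  have h_ratio : k / β ^ 2 ≤ 1 := div_le_one_of_le₀ hβ (sq_nonneg β)
  have h_factor : 0 ≤ 1 - (k : K)⁻¹ := sub_nonneg.mpr (Nat.cast_inv_le_one k)
  exact mul_le_mul_of_nonneg_left
    (pow_le_pow_of_le_one (by positivity) h_ratio (Nat.sub_le_sub_left hij n)) h_factor

theorem sum_levelTraffic_le (β : K) (u : Fin n → Fin k) :
    ∑ j : Fin n, levelTraffic β u j ≤ ∑ v, β ^ (-(treeDist u v : ℤ)) := by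
  have h_total : ∑ j ∈ Finset.range (n + 1), levelTraffic β u j =
      ∑ v, β ^ (-(treeDist u v : ℤ)) :=
    Finset.sum_fiberwise_of_maps_to
      (fun v _ ↦ Finset.mem_range_succ_iff.mpr (prefLen_le u v)) _
  rw [← h_total, Finset.sum_range_succ, Fin.sum_univ_eq_sum_range (levelTraffic β u)]
  exact le_add_of_nonneg_right (levelTraffic_nonneg β u n)

theorem natCast_mul_levelTraffic_zero_le (hβ : (k : K) ≤ β ^ 2) (u : Fin n → Fin k) :
    n * levelTraffic β u 0 ≤ ∑ v, β ^ (-(treeDist u v : ℤ)) :=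
  calc n * levelTraffic β u 0
      = ∑ _j : Fin n, levelTraffic β u 0 := by simp
    _ ≤ ∑ j : Fin n, levelTraffic β u j := Finset.sum_le_sum fun j _ ↦
        levelTraffic_mono hβ u (i := ⟨0, j.pos⟩) (Nat.zero_le j)
    _ ≤ ∑ v, β ^ (-(treeDist u v : ℤ)) := sum_levelTraffic_le β u

theorem sum_levelTraffic_zero_div_le_inv (hβ : (k : K) ≤ β ^ 2) (hn : 0 < n) :
    (∑ u : Fin n → Fin k, levelTraffic β u 0) /
      (∑ u : Fin n → Fin k, ∑ v : Fin n → Fin k, β ^ (-(treeDist u v : ℤ))) ≤ (n : K)⁻¹ := by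
  have h_total_nonneg :
      0 ≤ ∑ u : Fin n → Fin k, ∑ v : Fin n → Fin k, β ^ (-(treeDist u v : ℤ)) :=
    Finset.sum_nonneg fun u _ ↦ Finset.sum_nonneg fun v _ ↦ zpow_neg_treeDist_nonneg β u v
  refine div_le_of_le_mul₀ h_total_nonneg (by positivity) ?_
  rw [le_inv_mul_iff₀ (Nat.cast_pos.mpr hn), Finset.mul_sum]
  exact Finset.sum_le_sum fun u _ ↦ natCast_mul_levelTraffic_zero_le hβ u

end LevelTraffic

theorem root_traffic_proportion_tendsto_zero (k : ℕ) (hk : 2 ≤ k)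
    (β : ℝ) (hβ : Real.sqrt k ≤ β) :
    Tendsto
      (fun n : ℕ =>
        (∑ u : Fin n → Fin k, ∑ v : Fin n → Fin k,
            if treeDist u v = 2 * n then β ^ (-(treeDist u v : ℤ)) else 0) /
        (∑ u : Fin n → Fin k, ∑ v : Fin n → Fin k, β ^ (-(treeDist u v : ℤ))))
      atTop (nhds 0) := by
  have hkβ : (k : ℝ) ≤ β ^ 2 := (Real.sqrt_le_left ((Real.sqrt_nonneg k).trans hβ)).mp hβ
  simp only [sum_ite_treeDist_eq_two_mul]
  refine squeeze_zero' (.of_forall fun n ↦ ?_) ?_ tendsto_inv_atTop_nhds_zero_nat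
  · exact div_nonneg (Finset.sum_nonneg fun u _ ↦ levelTraffic_nonneg β u 0)
      (Finset.sum_nonneg fun u _ ↦ Finset.sum_nonneg fun v _ ↦ zpow_neg_treeDist_nonneg β u v)
  · filter_upwards [eventually_gt_atTop 0] with n hn
    exact sum_levelTraffic_zero_div_le_inv hkβ hn
end

section
/- Fix an integer k ≥ 2 and a real β with 1 < β < √k. For each n ≥ 1, model the leaves of the depth-n rooted k-ary tree as functions from Fin n to Fin k with tree distance d(u,v) = 2(n − ℓ(u,v)), where ℓ(u,v) is the length of the longest common prefix, and let P(n) be the proportion of the total traffic that passes through the root, namely P(n) = ( Σ_{(u,v): d(u,v)=2n} β^{−d(u,v)} ) / ( Σ_{(u,v)} β^{−d(u,v)} ), both sums over ordered pairs of leaves. Then P(n) → 1 − β²/k as n → ∞. -/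
open Filter

/-!
Write `Tₙ` for the total traffic and `Rₙ` for the traffic through the root. Removing the root leaves
`k` copies of the tree of depth `n`, so `Tₙ₊₁ = k Tₙ + Rₙ₊₁`, and `Rₙ₊₁ = k (k - 1) k²ⁿ β^(-2(n+1))`
grows geometrically with ratio `k² / β²`. Hence `xₙ = Tₙ / Rₙ` satisfies `xₙ₊₁ = (β² / k) xₙ + 1`, a
contraction whose fixed point is `(1 - β² / k)⁻¹`.
-/

theorem tendsto_arithGeom_of_norm_lt_one {𝕜 : Type*} [NormedField 𝕜] {a : 𝕜} (ha : ‖a‖ < 1)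
    (b u₀ : 𝕜) : Tendsto (arithGeom a b u₀) atTop (nhds (b / (1 - a))) := by
  have ha1 : a ≠ 1 := by
    rintro rfl
    exact ha.ne norm_one
  rw [arithGeom_eq' ha1]
  simpa only [zero_mul, zero_add] using
    ((tendsto_pow_atTop_nhds_zero_of_norm_lt_one ha).mul_const _).add_const (b / (1 - a))

theorem sum_sum_ite_eq_add_nsmul {ι M : Type*} [Fintype ι] [DecidableEq ι] [AddCommMonoid M]
    (x y : M) :
    ∑ a : ι, ∑ b : ι, (if a = b then x else y) =
      Fintype.card ι • x + (Fintype.card ι * (Fintype.card ι - 1)) • y := by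
  have row_sum (a : ι) : ∑ b : ι, (if a = b then x else y) = x + (Fintype.card ι - 1) • y := by
    have off_diag : ∑ b ∈ {a}ᶜ, (if a = b then x else y) = ∑ _b ∈ ({a}ᶜ : Finset ι), y :=
      Finset.sum_congr rfl fun b hb ↦ if_neg (by simpa [eq_comm] using hb)
    rw [Fintype.sum_eq_add_sum_compl a, if_pos rfl, off_diag, Finset.sum_const,
      Finset.card_compl, Finset.card_singleton]
  simp only [row_sum, Finset.sum_const, Finset.card_univ, nsmul_add, mul_nsmul']

theorem sum_pi_fin_succ {n : ℕ} {α M : Type*} [Fintype α] [AddCommMonoid M]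
    (g : (Fin (n + 1) → α) → M) :
    ∑ u, g u = ∑ a : α, ∑ u : Fin n → α, g (Fin.cons a u) := by
  rw [← Fintype.sum_prod_type']
  exact ((Fin.consEquiv fun _ ↦ α).sum_comp g).symm

section Tree

variable {n k : ℕ}

theorem le_prefLen_iff {u v : Fin n → Fin k} {j : ℕ} :
    j ≤ prefLen u v ↔ j ≤ n ∧ ∀ i : Fin n, (i : ℕ) < j → u i = v i := by
  refine ⟨fun hj ↦ ⟨hj.trans (Nat.findGreatest_le n), fun i hi ↦ ?_⟩,
    fun ⟨hjn, hj⟩ ↦ Nat.le_findGreatest hjn hj⟩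
  have agree : ∀ i : Fin n, (i : ℕ) < prefLen u v → u i = v i :=
    Nat.findGreatest_spec (P := fun j ↦ ∀ i : Fin n, (i : ℕ) < j → u i = v i) (Nat.zero_le n)
      fun _ hi ↦ absurd hi (Nat.not_lt_zero _)
  exact agree i (hi.trans_le hj)

theorem prefLen_cons (a b : Fin k) (u v : Fin n → Fin k) :
    prefLen (Fin.cons a u : Fin (n + 1) → Fin k) (Fin.cons b v) =
      if a = b then prefLen u v + 1 else 0 := by
  refine eq_of_forall_le_iff fun j ↦ ?_
  rcases j with _ | j
  · simp only [Nat.zero_le]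
  · rw [le_prefLen_iff, Fin.forall_fin_succ]
    split_ifs with hab <;> simp [le_prefLen_iff, hab]

theorem treeDist_cons (a b : Fin k) (u v : Fin n → Fin k) :
    treeDist (Fin.cons a u : Fin (n + 1) → Fin k) (Fin.cons b v) =
      if a = b then treeDist u v else 2 * (n + 1) := by
  unfold treeDist
  rw [prefLen_cons]
  split_ifs <;> omega

theorem treeDist_le (u v : Fin n → Fin k) : treeDist u v ≤ 2 * n :=
  Nat.mul_le_mul_left 2 (Nat.sub_le n _)

theorem sum_treeDist_succ {M : Type*} [AddCommMonoid M] (n k : ℕ) (f : ℕ → M) :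
    ∑ u : Fin (n + 1) → Fin k, ∑ v : Fin (n + 1) → Fin k, f (treeDist u v) =
      k • (∑ u : Fin n → Fin k, ∑ v : Fin n → Fin k, f (treeDist u v)) +
        (k * (k - 1)) • (k ^ n * k ^ n) • f (2 * (n + 1)) := by
  have subtree_sum (a b : Fin k) :
      ∑ u : Fin n → Fin k, ∑ v : Fin n → Fin k,
          f (treeDist (Fin.cons a u : Fin (n + 1) → Fin k) (Fin.cons b v)) =
        if a = b then ∑ u : Fin n → Fin k, ∑ v : Fin n → Fin k, f (treeDist u v)
        else (k ^ n * k ^ n) • f (2 * (n + 1)) := by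
    simp only [treeDist_cons]
    split_ifs
    · rfl
    · simp only [Finset.sum_const, Finset.card_univ, Fintype.card_pi_const, Fintype.card_fin,
        mul_nsmul']
  calc
    _ = ∑ a : Fin k, ∑ u : Fin n → Fin k, ∑ b : Fin k, ∑ v : Fin n → Fin k,
          f (treeDist (Fin.cons a u : Fin (n + 1) → Fin k) (Fin.cons b v)) := by
      simp only [sum_pi_fin_succ (n := n)]
    _ = ∑ a : Fin k, ∑ b : Fin k, ∑ u : Fin n → Fin k, ∑ v : Fin n → Fin k,
          f (treeDist (Fin.cons a u : Fin (n + 1) → Fin k) (Fin.cons b v)) :=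
      Finset.sum_congr rfl fun _ _ ↦ Finset.sum_comm
    _ = _ := by
      simp only [subtree_sum, sum_sum_ite_eq_add_nsmul, Fintype.card_fin]

end Tree

section Traffic

variable {𝕜 : Type*}

/-- The total traffic between the leaves of the `k`-ary tree of depth `n`: the sum of the rates
`β ^ (-d(u,v))` over all ordered pairs of leaves, the diagonal included. -/
def totalTraffic [Field 𝕜] (n k : ℕ) (β : 𝕜) : 𝕜 :=
  ∑ u : Fin n → Fin k, ∑ v : Fin n → Fin k, β ^ (-(treeDist u v : ℤ))

/-- The part of `totalTraffic n k β` that passes through the root, i.e. the contribution of the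
ordered pairs of leaves at the maximal distance `2 * n`. For `n = 0` this is the single diagonal
pair. -/
def rootTraffic [Field 𝕜] (n k : ℕ) (β : 𝕜) : 𝕜 :=
  ∑ u : Fin n → Fin k, ∑ v : Fin n → Fin k,
    if treeDist u v = 2 * n then β ^ (-(treeDist u v : ℤ)) else 0

theorem rootTraffic_succ [Field 𝕜] (n k : ℕ) (β : 𝕜) :
    rootTraffic (n + 1) k β =
      (k * (k - 1)) • (k ^ n * k ^ n) • (β ^ (2 * (n + 1)))⁻¹ := by
  have not_through_root (u v : Fin n → Fin k) : treeDist u v ≠ 2 * (n + 1) :=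
    ((treeDist_le u v).trans_lt (by omega)).ne
  unfold rootTraffic
  rw [sum_treeDist_succ n k fun d ↦ if d = 2 * (n + 1) then β ^ (-(d : ℤ)) else 0]
  simp only [not_through_root, if_false, if_true, Finset.sum_const_zero, smul_zero, zero_add,
    zpow_neg, zpow_natCast]

theorem totalTraffic_succ [Field 𝕜] (n k : ℕ) (β : 𝕜) :
    totalTraffic (n + 1) k β = k * totalTraffic n k β + rootTraffic (n + 1) k β := by
  rw [rootTraffic_succ, ← nsmul_eq_mul, ← zpow_natCast, ← zpow_neg]
  exact sum_treeDist_succ n k fun d ↦ β ^ (-(d : ℤ))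

theorem rootTraffic_succ_succ [Field 𝕜] (n k : ℕ) (β : 𝕜) :
    rootTraffic (n + 2) k β = k ^ 2 / β ^ 2 * rootTraffic (n + 1) k β := by
  simp only [rootTraffic_succ, nsmul_eq_mul, Nat.cast_mul, Nat.cast_pow]
  ring

theorem rootTraffic_succ_ne_zero [Field 𝕜] {k : ℕ} {β : 𝕜} (hk0 : (k : 𝕜) ≠ 0)
    (hk1 : (k : 𝕜) ≠ 1) (hβ : β ≠ 0) (n : ℕ) : rootTraffic (n + 1) k β ≠ 0 := by
  have k_pos : 0 < k := Nat.pos_of_ne_zero fun h ↦ hk0 (by rw [h, Nat.cast_zero])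
  simp only [rootTraffic_succ, nsmul_eq_mul, Nat.cast_mul, Nat.cast_pow, Nat.cast_pred k_pos]
  have := sub_ne_zero.2 hk1
  positivity

theorem totalTraffic_div_rootTraffic_eq_arithGeom [Field 𝕜] {k : ℕ} {β : 𝕜} (hk0 : (k : 𝕜) ≠ 0)
    (hk1 : (k : 𝕜) ≠ 1) (hβ : β ≠ 0) (n : ℕ) :
    totalTraffic (n + 1) k β / rootTraffic (n + 1) k β =
      arithGeom (β ^ 2 / k) 1 (totalTraffic 1 k β / rootTraffic 1 k β) n := by
  induction n with
  | zero => rfl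
  | succ n ih =>
    have root_ne := rootTraffic_succ_ne_zero hk0 hk1 hβ n
    rw [arithGeom_succ, ← ih, totalTraffic_succ (n + 1), rootTraffic_succ_succ]
    field_simp

theorem root_traffic_proportion_tendsto_global_general [NormedField 𝕜] {k : ℕ} {β : 𝕜}
    (hk : (k : 𝕜) ≠ 1) (hβ0 : β ≠ 0) (hβ : ‖β‖ ^ 2 < ‖(k : 𝕜)‖) :
    Tendsto (fun n ↦ rootTraffic n k β / totalTraffic n k β) atTop (nhds (1 - β ^ 2 / k)) := by
  have norm_k_pos : 0 < ‖(k : 𝕜)‖ := (sq_nonneg _).trans_lt hβ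
  have ratio_lt_one : ‖β ^ 2 / (k : 𝕜)‖ < 1 := by
    rwa [norm_div, norm_pow, div_lt_one norm_k_pos]
  have limit_ne_zero : 1 - β ^ 2 / (k : 𝕜) ≠ 0 := by
    refine sub_ne_zero.2 fun h ↦ ratio_lt_one.ne ?_
    rw [← h, norm_one]
  have inv_tendsto : Tendsto (fun n ↦ totalTraffic (n + 1) k β / rootTraffic (n + 1) k β) atTop
      (nhds (1 / (1 - β ^ 2 / k))) :=
    (tendsto_arithGeom_of_norm_lt_one ratio_lt_one 1 _).congr fun n ↦
      (totalTraffic_div_rootTraffic_eq_arithGeom (norm_pos_iff.1 norm_k_pos) hk hβ0 n).symm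
  rw [← tendsto_add_atTop_iff_nat 1]
  simpa only [inv_div, div_one] using inv_tendsto.inv₀ (one_div_ne_zero limit_ne_zero)

end Traffic

theorem root_traffic_proportion_tendsto_global (k : ℕ) (hk : 2 ≤ k)
    (β : ℝ) (hβ1 : 1 < β) (hβ2 : β < Real.sqrt k) :
    Tendsto
      (fun n : ℕ =>
        (∑ u : Fin n → Fin k, ∑ v : Fin n → Fin k,
            if treeDist u v = 2 * n then β ^ (-(treeDist u v : ℤ)) else 0) /
        (∑ u : Fin n → Fin k, ∑ v : Fin n → Fin k, β ^ (-(treeDist u v : ℤ))))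
      atTop (nhds (1 - β ^ 2 / (k : ℝ))) := by
  refine root_traffic_proportion_tendsto_global_general
    (Nat.cast_ne_one.2 (by omega)) (by positivity) ?_
  rwa [Real.norm_natCast, Real.norm_eq_abs, sq_abs, ← Real.lt_sqrt (by positivity)]
end

section
/- Let (Y, d) be a metric space equipped with a Borel measure ν, and let K > 0, C > 0, D > 0, a > 1 and r₀ > 0 be constants such that ν(B(x,r)) ≥ K^{−1}·r^D for every x ∈ Y and every r with 0 < r ≤ r₀ (lower Ahlfors regularity), and such that ν has no atoms. Let h : Y × Y → ℕ be a function satisfying d(x,y) ≥ C^{−1}·a^{−h(x,y)} for all x ≠ y in Y. If β > 1 and β² > a^D, then for every x ∈ Y the integral ∫_Y β^{2·h(x,y)} dν(y) is infinite. -/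
open MeasureTheory

open Filter Metric Set Topology

/-!
Write `r m = C⁻¹ * a ^ (-m)`. The separation hypothesis forces `m ≤ h x y` for every `y ≠ x` in the
ball of radius `r m` around `x`. As `x` is not an atom, the integral is therefore at least
`β ^ (2 * m)` times the mass of this ball, hence at least `β ^ (2 * m) * (K⁻¹ * r m ^ D)` for large
`m`. This bound is a constant multiple of `(β ^ 2 / a ^ D) ^ m`, which is unbounded in `m`.
-/

section LIntegral

variable {α : Type*} [MeasurableSpace α] {μ : Measure α} {f : α → ENNReal}

theorem const_mul_measure_le_lintegral {s : Set α} {c : ENNReal} (hs : MeasurableSet s)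
    (hcf : ∀ᵐ y ∂μ, y ∈ s → c ≤ f y) : c * μ s ≤ ∫⁻ y, f y ∂μ :=
  calc c * μ s = ∫⁻ _ in s, c ∂μ := (setLIntegral_const s c).symm
    _ ≤ ∫⁻ y in s, f y ∂μ := setLIntegral_mono_ae' hs hcf
    _ ≤ ∫⁻ y, f y ∂μ := setLIntegral_le_lintegral s f

theorem lintegral_eq_top_of_tendsto_mul_measure {ι : Type*} {l : Filter ι} [l.NeBot]
    {s : ι → Set α} {c : ι → ENNReal} (hs : ∀ i, MeasurableSet (s i))
    (hcf : ∀ i, ∀ᵐ y ∂μ, y ∈ s i → c i ≤ f y)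
    (htop : Tendsto (fun i ↦ c i * μ (s i)) l (𝓝 ⊤)) : ∫⁻ y, f y ∂μ = ⊤ :=
  top_le_iff.1 <| le_of_tendsto' htop fun i ↦ const_mul_measure_le_lintegral (hs i) (hcf i)

end LIntegral

section GeometricRadii

variable {a c : ℝ}

theorem tendsto_mul_zpow_neg_nhdsGT_zero (hc : 0 < c) (ha : 1 < a) :
    Tendsto (fun m : ℕ ↦ c * a ^ (-(m : ℤ))) atTop (𝓝[>] 0) := by
  have hlim : Tendsto (fun m : ℕ ↦ c * (a ^ m)⁻¹) atTop (𝓝 (c * 0)) :=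
    (tendsto_pow_atTop_atTop_of_one_lt ha).inv_tendsto_atTop.const_mul c
  refine tendsto_nhdsWithin_iff.2
    ⟨?_, .of_forall fun m ↦ mul_pos hc (zpow_pos (one_pos.trans ha) _)⟩
  simpa only [zpow_neg, zpow_natCast, mul_zero] using hlim

theorem tendsto_pow_mul_rpow_mul_zpow_neg_atTop {b k D : ℝ} (hk : 0 < k) (hc : 0 < c)
    (ha : 0 < a) (hab : a ^ D < b) :
    Tendsto (fun m : ℕ ↦ b ^ m * (k * (c * a ^ (-(m : ℤ))) ^ D)) atTop atTop := by
  have haD : 0 < a ^ D := Real.rpow_pos_of_pos ha D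
  have hratio : Tendsto (fun m : ℕ ↦ k * c ^ D * (b / a ^ D) ^ m) atTop atTop :=
    (tendsto_pow_atTop_atTop_of_one_lt <| (one_lt_div haD).2 hab).const_mul_atTop (by positivity)
  refine hratio.congr fun m ↦ ?_
  rw [Real.mul_rpow hc.le (by positivity), zpow_neg, zpow_natCast, Real.inv_rpow (by positivity),
    ← Real.rpow_pow_comm ha.le, div_pow]
  ring

theorem closedBall_mul_zpow_neg_diff_singleton_subset {Y : Type*} [PseudoMetricSpace Y] {x : Y}
    {h : Y → ℕ} (hc : 0 < c) (ha : 1 < a)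
    (hh : ∀ y, x ≠ y → c * a ^ (-(h y : ℤ)) ≤ dist x y) (m : ℕ) :
    closedBall x (c * a ^ (-(m : ℤ))) \ {x} ⊆ {y | m ≤ h y} := by
  rintro y ⟨hy, hyx⟩
  have hradii : c * a ^ (-(h y : ℤ)) ≤ c * a ^ (-(m : ℤ)) :=
    (hh y (Ne.symm hyx)).trans (mem_closedBall'.1 hy)
  have hexp : -(h y : ℤ) ≤ -(m : ℤ) :=
    (zpow_le_zpow_iff_right₀ ha).1 (le_of_mul_le_mul_left hradii hc)
  exact Int.ofNat_le.1 (neg_le_neg_iff.1 hexp)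

end GeometricRadii

theorem integral_infinite_of_supercritical_general
    {Y : Type*} [PseudoMetricSpace Y] [MeasurableSpace Y] [OpensMeasurableSpace Y]
    {ν : Measure Y} {K C D a b : ℝ} {x : Y} {h : Y → ℕ}
    (hK : 0 < K) (hC : 0 < C) (ha : 1 < a)
    (hAhlfors : ∀ᶠ r in 𝓝[>] 0, ENNReal.ofReal (K⁻¹ * r ^ D) ≤ ν (closedBall x r))
    (hNoAtom : ν {x} = 0)
    (hh : ∀ y, x ≠ y → C⁻¹ * a ^ (-(h y : ℤ)) ≤ dist x y)
    (hb : 1 ≤ b) (hab : a ^ D < b) :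
    ∫⁻ y, ENNReal.ofReal (b ^ h y) ∂ν = ⊤ := by
  have hC' : 0 < C⁻¹ := inv_pos.2 hC
  have hball : ∀ m : ℕ, ∀ᵐ y ∂ν, y ∈ closedBall x (C⁻¹ * a ^ (-(m : ℤ))) →
      ENNReal.ofReal (b ^ m) ≤ ENNReal.ofReal (b ^ h y) := fun m ↦ by
    filter_upwards [compl_mem_ae_iff.2 hNoAtom] with y hyx hy
    have hmy : m ≤ h y := closedBall_mul_zpow_neg_diff_singleton_subset hC' ha hh m ⟨hy, hyx⟩
    gcongr
  have htop : Tendsto (fun m : ℕ ↦ ENNReal.ofReal (b ^ m) *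
      ν (closedBall x (C⁻¹ * a ^ (-(m : ℤ))))) atTop (𝓝 ⊤) := by
    refine tendsto_nhds_top_mono (ENNReal.tendsto_ofReal_atTop.comp <|
      tendsto_pow_mul_rpow_mul_zpow_neg_atTop (inv_pos.2 hK) hC' (one_pos.trans ha) hab) ?_
    filter_upwards [(tendsto_mul_zpow_neg_nhdsGT_zero hC' ha).eventually hAhlfors] with m hm
    rw [Function.comp_apply, ENNReal.ofReal_mul (by positivity)]
    gcongr
  exact lintegral_eq_top_of_tendsto_mul_measure
    (fun m ↦ isClosed_closedBall.measurableSet) hball htop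

theorem integral_infinite_of_supercritical
    {Y : Type*} [MetricSpace Y] [MeasurableSpace Y] [BorelSpace Y]
    (ν : Measure Y) (K C D a r₀ : ℝ)
    (hK : 0 < K) (hC : 0 < C) (hD : 0 < D) (ha : 1 < a) (hr₀ : 0 < r₀)
    (hAhlfors : ∀ x : Y, ∀ r : ℝ, 0 < r → r ≤ r₀ →
      ENNReal.ofReal (K⁻¹ * r ^ D) ≤ ν (Metric.closedBall x r))
    (hNoAtoms : ∀ x : Y, ν {x} = 0)
    (h : Y → Y → ℕ)
    (hh : ∀ x y : Y, x ≠ y → C⁻¹ * a ^ (-(h x y : ℤ)) ≤ dist x y)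
    (β : ℝ) (hβ : 1 < β) (hβa : a ^ D < β ^ 2) :
    ∀ x : Y, ∫⁻ y, ENNReal.ofReal (β ^ (2 * h x y)) ∂ν = ⊤ := by
  intro x
  simpa only [pow_mul] using integral_infinite_of_supercritical_general hK hC ha
    (mem_of_superset (Ioc_mem_nhdsGT hr₀) fun r hr ↦ hAhlfors x r hr.1 hr.2)
    (hNoAtoms x) (hh x) (one_le_pow₀ hβ.le) hβa
end
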